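/- arXiv:1412.7840 — 2 statements merged into one kernel-verified Lean document; each statement's English description precedes it below -/
import Mathlib

section
/- Suppose the pair (A,B) is controllable (the controllability matrix [B, AB, …, A^{n-1}B] has rank n) and A is nonsingular. Then for every α ∈ [0,T], the set R_α equals the sublevel set {ξ ∈ R : V(ξ) ≤ α} of the value function. -/
open MeasureTheory Set

noncomputable section

/-- Controllability matrix `[B, AB, ..., A^{n-1}B]`. -/
def ctrbMatrix (n : ℕ) (A : Matrix (Fin n) (Fin n) ℝ) (B : Fin n → ℝ) :
    Matrix (Fin n) (Fin n) ℝ :=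
  Matrix.of fun i j => (A ^ (j : ℕ)).mulVec B i

/-- `∫₀ᵀ e^{-As} B u(s) ds`. -/
def stateInt (n : ℕ) (T : ℝ) (A : Matrix (Fin n) (Fin n) ℝ) (B : Fin n → ℝ)
    (u : ℝ → ℝ) : Fin n → ℝ :=
  ∫ s in Icc (0:ℝ) T, u s • (NormedSpace.exp ((-s) • A)).mulVec B

/-- The magnitude constraint `‖u‖_∞ ≤ 1` on `[0,T]`. -/
def MagBdd (T : ℝ) (u : ℝ → ℝ) : Prop := ∀ t ∈ Icc (0:ℝ) T, |u t| ≤ 1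

/-- The `L¹` norm of `u` on `[0,T]`. -/
def L1Norm (T : ℝ) (u : ℝ → ℝ) : ℝ := ∫ t in Icc (0:ℝ) T, |u t|

/-- The `L⁰` norm of `u`: Lebesgue measure of `{t ∈ [0,T] : u t ≠ 0}`. -/
def L0Norm (T : ℝ) (u : ℝ → ℝ) : ℝ := (volume {t ∈ Icc (0:ℝ) T | u t ≠ 0}).toReal

/-- Admissible controls steering `ξ` to `0` at time `T`:
`∫₀ᵀ e^{-As} B u(s) ds = -ξ` and `‖u‖_∞ ≤ 1`. -/
def Admissible (n : ℕ) (T : ℝ) (A : Matrix (Fin n) (Fin n) ℝ) (B : Fin n → ℝ)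
    (ξ : Fin n → ℝ) (u : ℝ → ℝ) : Prop :=
  Measurable u ∧ MagBdd T u ∧ stateInt n T A B u = -ξ

/-- Value function of the maximum hands-off (`L⁰`-optimal) control problem. -/
def V0 (n : ℕ) (T : ℝ) (A : Matrix (Fin n) (Fin n) ℝ) (B : Fin n → ℝ)
    (ξ : Fin n → ℝ) : ℝ :=
  sInf {c | ∃ u, Admissible n T A B ξ u ∧ c = L0Norm T u}

/-- Value function of the `L¹`-optimal control problem. -/
def V1 (n : ℕ) (T : ℝ) (A : Matrix (Fin n) (Fin n) ℝ) (B : Fin n → ℝ)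
    (ξ : Fin n → ℝ) : ℝ :=
  sInf {c | ∃ u, Admissible n T A B ξ u ∧ c = L1Norm T u}

/-- The reachable set `R`. -/
def Reach (n : ℕ) (T : ℝ) (A : Matrix (Fin n) (Fin n) ℝ) (B : Fin n → ℝ) :
    Set (Fin n → ℝ) :=
  {x | ∃ u, Measurable u ∧ MagBdd T u ∧ x = stateInt n T A B u}

/-- The set `R_α`. -/
def ReachL1 (n : ℕ) (T : ℝ) (A : Matrix (Fin n) (Fin n) ℝ) (B : Fin n → ℝ)
    (α : ℝ) : Set (Fin n → ℝ) :=
  {x | ∃ u, Measurable u ∧ MagBdd T u ∧ L1Norm T u ≤ α ∧ x = stateInt n T A B u}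

/-!
Among the `L²` functions with values in `[a, b]` and prescribed moment `∫ f k`, a weakly compact
convex set, pick an extreme point `f`. If `φ` injects the base space into `[0, 1]`, some nonzero
polynomial `p` makes `h = min (f - a) (b - f) · p ∘ φ` have zero moment, because `k` takes values in
a finite-dimensional space; after rescaling `p`, both `f + h` and `f - h` are admissible, so `h = 0`
and `f` takes only the values `a` and `b` almost everywhere (Lyapunov's convexity theorem).
Applied to `|u|` on `[0, 1]` with the kernel `(sign u · k, 1)`, this turns a control `u` into one
with values in `{-1, 0, 1}`, the same final state, and `L⁰` norm equal to `‖u‖₁`; hence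
`V(ξ) ≤ ‖u‖₁`. Conversely the `L¹` norm attains its minimum over the controls reaching `ξ`, again by
weak compactness, and `‖w‖₁ ≤ ‖w‖₀` for each of them, so the minimum is at most `V(ξ)`.
-/

theorem eq_zero_of_mem_extremePoints {E : Type*} [AddCommGroup E] [Module ℝ E] {K : Set E}
    {x h : E} (hx : x ∈ K.extremePoints ℝ) (hadd : x + h ∈ K) (hsub : x - h ∈ K) : h = 0 := by
  have hmid : x ∈ openSegment ℝ (x + h) (x - h) := by
    simpa using midpoint_mem_openSegment (𝕜 := ℝ) (x + h) (x - h)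
  simpa using hx.2 hadd hsub hmid

section WeakTopology

variable {E : Type*} [AddCommGroup E] [Module ℝ E] [TopologicalSpace E] [IsTopologicalAddGroup E]
  [ContinuousSMul ℝ E]

instance : LocallyConvexSpace ℝ (WeakSpace ℝ E) :=
  inferInstanceAs (LocallyConvexSpace ℝ (WeakBilin _))

theorem isClosed_toWeakSpace_image [LocallyConvexSpace ℝ E] {K : Set E}
    (hconv : Convex ℝ K) (hclosed : IsClosed K) : IsClosed (toWeakSpace ℝ E '' K) := by
  rw [← closure_eq_iff_isClosed, ← hconv.toWeakSpace_closure ℝ, hclosed.closure_eq]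

end WeakTopology

section Reflexive

variable {E : Type*} [NormedAddCommGroup E] [NormedSpace ℝ E] {K : Set E}

theorem inclusionInDoubleDual_surjective (H : Type*) [NormedAddCommGroup H]
    [InnerProductSpace ℝ H] [CompleteSpace H] :
    Function.Surjective (NormedSpace.inclusionInDoubleDual ℝ H) := fun Φ => by
  let R := InnerProductSpace.toDual ℝ H
  let Φ' : StrongDual ℝ H := Φ ∘L R.toContinuousLinearEquiv.toContinuousLinearMap
  refine ⟨R.symm Φ', ContinuousLinearMap.ext fun f => ?_⟩
  obtain ⟨x, rfl⟩ := R.surjective f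
  calc R x (R.symm Φ') = inner ℝ (R.symm Φ') x := by
        rw [InnerProductSpace.toDual_apply_apply, real_inner_comm]
    _ = Φ (R x) := InnerProductSpace.toDual_symm_apply

theorem isCompact_toWeakSpace_image
    (hE : Function.Surjective (NormedSpace.inclusionInDoubleDual ℝ E))
    (hconv : Convex ℝ K) (hclosed : IsClosed K) (hbdd : Bornology.IsBounded K) :
    IsCompact (toWeakSpace ℝ E '' K) := by
  rw [← (isClosed_toWeakSpace_image hconv hclosed).closure_eq]
  refine NormedSpace.isCompact_closure_of_isBounded ℝ E _ ?_ fun Φ _ => ?_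
  · rwa [preimage_image_eq _ (toWeakSpace ℝ E).injective]
  · obtain ⟨x, hx⟩ := hE (WeakDual.toStrongDual Φ)
    exact ⟨toWeakSpace ℝ E x, hx⟩

theorem extremePoints_nonempty_of_reflexive
    (hE : Function.Surjective (NormedSpace.inclusionInDoubleDual ℝ E)) (hconv : Convex ℝ K)
    (hclosed : IsClosed K) (hbdd : Bornology.IsBounded K) (hne : K.Nonempty) :
    (K.extremePoints ℝ).Nonempty := by
  have hne' := (isCompact_toWeakSpace_image hE hconv hclosed hbdd).extremePoints_nonempty
    (hne.image _)
  rwa [← image_extremePoints, image_nonempty] at hne'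

theorem exists_isMinOn_of_reflexive
    (hE : Function.Surjective (NormedSpace.inclusionInDoubleDual ℝ E)) (hclosed : IsClosed K)
    (hbdd : Bornology.IsBounded K) (hne : K.Nonempty) {φ : E → ℝ} (hφ : ConvexOn ℝ K φ)
    (hφc : ContinuousOn φ K) : ∃ x ∈ K, IsMinOn φ K x := by
  have hlsc : LowerSemicontinuousOn (φ ∘ (toWeakSpace ℝ E).symm) (toWeakSpace ℝ E '' K) := by
    refine lowerSemicontinuousOn_iff_preimage_Iic.2 fun c =>
      ⟨_, isClosed_toWeakSpace_image (hφ.convex_le c)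
        (hφc.preimage_isClosed_of_isClosed hclosed isClosed_Iic), ?_⟩
    ext x
    obtain ⟨x, rfl⟩ := (toWeakSpace ℝ E).surjective x
    simp +contextual
  obtain ⟨_, ⟨x, hx, rfl⟩, hmin⟩ := hlsc.exists_isMinOn (hne.image _)
    (isCompact_toWeakSpace_image hE hφ.1 hclosed hbdd)
  exact ⟨x, hx, fun y hy => by simpa using hmin (mem_image_of_mem _ hy)⟩

end Reflexive

theorem isBounded_Icc_of_hasSolidNorm {E : Type*} [NormedAddCommGroup E] [Lattice E]
    [HasSolidNorm E] [IsOrderedAddMonoid E] (a b : E) : Bornology.IsBounded (Icc a b) := by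
  refine Metric.isBounded_closedBall (x := a) (r := ‖b - a‖) |>.subset fun f hf => ?_
  rw [mem_closedBall_iff_norm]
  refine norm_le_norm_of_abs_le_abs ?_
  rw [abs_of_nonneg (sub_nonneg.2 hf.1)]
  exact (sub_le_sub_right hf.2 a).trans (le_abs_self _)

section Lp

variable {X : Type*} [MeasurableSpace X] {μ : Measure X} {p : ENNReal}

instance : PosSMulMono ℝ (Lp ℝ p μ) where
  smul_le_smul_of_nonneg_left c hc f g hfg := by
    rw [← Lp.coeFn_le] at hfg ⊢
    filter_upwards [hfg, Lp.coeFn_smul c f, Lp.coeFn_smul c g] with x hx hf hg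
    simpa [hf, hg] using mul_le_mul_of_nonneg_left hx hc

theorem mem_Icc_const_iff [IsFiniteMeasure μ] {a b : ℝ} {f : Lp ℝ p μ} :
    f ∈ Icc (Lp.const p μ a) (Lp.const p μ b) ↔ ∀ᵐ x ∂μ, f x ∈ Icc a b := by
  rw [mem_Icc, ← Lp.coeFn_le, ← Lp.coeFn_le]
  refine ⟨fun ⟨ha, hb⟩ => ?_, fun h => ⟨?_, ?_⟩⟩
  · filter_upwards [ha, hb, Lp.coeFn_const p μ a, Lp.coeFn_const p μ b] with x ha hb hca hcb
    exact ⟨hca.ge.trans ha, hb.trans hcb.le⟩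
  · filter_upwards [h, Lp.coeFn_const p μ a] with x hx hca
    exact hca.le.trans hx.1
  · filter_upwards [h, Lp.coeFn_const p μ b] with x hx hcb
    exact hx.2.trans hcb.ge

end Lp

section Moments

variable {X : Type*} [MeasurableSpace X] {μ : Measure X}
variable {F : Type*} [NormedAddCommGroup F] [NormedSpace ℝ F] [CompleteSpace F]

/-- The moment map `u ↦ ∫ u k` of a square-integrable kernel `k`, as a bounded operator on `L²`. -/
def momentCLM {k : X → F} (hk : MemLp k 2 μ) : Lp ℝ 2 μ →L[ℝ] F :=
  ((ContinuousLinearMap.lsmul ℝ ℝ).lpPairing μ 2 2).flip (hk.toLp k)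

theorem momentCLM_apply {k : X → F} (hk : MemLp k 2 μ) (f : Lp ℝ 2 μ) :
    momentCLM hk f = ∫ x, f x • k x ∂μ := by
  rw [momentCLM, ContinuousLinearMap.flip_apply, ContinuousLinearMap.lpPairing_eq_integral]
  refine integral_congr_ae ?_
  filter_upwards [hk.coeFn_toLp] with x hx
  simp [hx]

theorem momentCLM_toLp {k : X → F} (hk : MemLp k 2 μ) {u : X → ℝ} (hu : MemLp u 2 μ) :
    momentCLM hk (hu.toLp u) = ∫ x, u x • k x ∂μ := by
  rw [momentCLM_apply]
  refine integral_congr_ae ?_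
  filter_upwards [hu.coeFn_toLp] with x hx
  rw [hx]

/-- The inclusion of `L²` into `L¹` over a finite measure, realised as multiplication by the
constant `1 ∈ L²`. -/
def l2ToL1 [IsFiniteMeasure μ] : Lp ℝ 2 μ →L[ℝ] Lp ℝ 1 μ :=
  ((ContinuousLinearMap.lsmul ℝ ℝ).holderL μ 2 2 1).flip (Lp.const 2 μ (1 : ℝ))

theorem norm_l2ToL1 [IsFiniteMeasure μ] (f : Lp ℝ 2 μ) : ‖l2ToL1 f‖ = ∫ x, |f x| ∂μ := by
  rw [L1.norm_eq_integral_norm]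
  refine integral_congr_ae ?_
  filter_upwards [(ContinuousLinearMap.lsmul ℝ ℝ).coeFn_holder (r := 1) f (Lp.const 2 μ (1 : ℝ)),
    Lp.coeFn_const 2 μ (1 : ℝ)] with x hx hone
  rw [← Real.norm_eq_abs]
  congr 1
  refine hx.trans ?_
  rw [hone]
  simp

theorem norm_l2ToL1_toLp [IsFiniteMeasure μ] {u : X → ℝ} (hu : MemLp u 2 μ) :
    ‖l2ToL1 (hu.toLp u)‖ = ∫ x, |u x| ∂μ := by
  rw [norm_l2ToL1]
  refine integral_congr_ae ?_
  filter_upwards [hu.coeFn_toLp] with x hx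
  rw [hx]

/-- The `L²` functions with values in `[a, b]` whose moment against `k` is `y`. -/
def momentFibre [IsFiniteMeasure μ] {k : X → F} (hk : MemLp k 2 μ) (a b : ℝ) (y : F) :
    Set (Lp ℝ 2 μ) :=
  Icc (Lp.const 2 μ a) (Lp.const 2 μ b) ∩ momentCLM hk ⁻¹' {y}

section Fibre

variable [IsFiniteMeasure μ] {k : X → F} (hk : MemLp k 2 μ) (a b : ℝ) (y : F)

theorem convex_momentFibre : Convex ℝ (momentFibre hk a b y) :=
  (convex_Icc _ _).inter ((convex_singleton y).linear_preimage (momentCLM hk).toLinearMap)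

theorem isClosed_momentFibre : IsClosed (momentFibre hk a b y) :=
  isClosed_Icc.inter (isClosed_singleton.preimage (momentCLM hk).continuous)

theorem isBounded_momentFibre : Bornology.IsBounded (momentFibre hk a b y) :=
  (isBounded_Icc_of_hasSolidNorm _ _).subset inter_subset_left

variable {hk a b y}

theorem mem_momentFibre_iff {f : Lp ℝ 2 μ} :
    f ∈ momentFibre hk a b y ↔ (∀ᵐ x ∂μ, f x ∈ Icc a b) ∧ ∫ x, f x • k x ∂μ = y := by
  rw [momentFibre, mem_inter_iff, mem_Icc_const_iff, mem_preimage, mem_singleton_iff,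
    momentCLM_apply]

theorem toLp_mem_momentFibre_iff {u : X → ℝ} (hu : MemLp u 2 μ) :
    hu.toLp u ∈ momentFibre hk a b y ↔ (∀ᵐ x ∂μ, u x ∈ Icc a b) ∧ ∫ x, u x • k x ∂μ = y := by
  rw [momentFibre, mem_inter_iff, mem_Icc_const_iff, mem_preimage, mem_singleton_iff,
    momentCLM_toLp, Filter.eventually_congr (hu.coeFn_toLp.mono fun x hx => by rw [hx])]

theorem add_toLp_mem_momentFibre {f : Lp ℝ 2 μ} (hf : f ∈ momentFibre hk a b y) {h : X → ℝ}
    (hh : MemLp h 2 μ) (hle : ∀ᵐ x ∂μ, |h x| ≤ min (f x - a) (b - f x))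
    (hint : ∫ x, h x • k x ∂μ = 0) : f + hh.toLp h ∈ momentFibre hk a b y := by
  refine ⟨mem_Icc_const_iff.2 ?_, ?_⟩
  · filter_upwards [Lp.coeFn_add f (hh.toLp h), hh.coeFn_toLp, hle] with x hadd hhx hx
    obtain ⟨ha, hb⟩ := le_min_iff.1 hx
    rw [hadd, Pi.add_apply, hhx]
    exact ⟨by linarith [neg_abs_le (h x)], by linarith [le_abs_self (h x)]⟩
  · have hfy : momentCLM hk f = y := hf.2
    rw [mem_preimage, map_add, momentCLM_toLp, hint, hfy, add_zero, mem_singleton_iff]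

end Fibre

theorem exists_forall_integral_abs_le [IsFiniteMeasure μ] {k : X → F} (hk : MemLp k 2 μ) {a b : ℝ}
    {w : X → ℝ} (hwm : AEStronglyMeasurable w μ) (hw : ∀ᵐ x ∂μ, w x ∈ Icc a b) (hab : a ≤ b) :
    ∃ u, Measurable u ∧ (∀ x, u x ∈ Icc a b) ∧ ∫ x, u x • k x ∂μ = ∫ x, w x • k x ∂μ ∧
      ∀ v, AEStronglyMeasurable v μ → (∀ᵐ x ∂μ, v x ∈ Icc a b) →
        ∫ x, v x • k x ∂μ = ∫ x, w x • k x ∂μ → ∫ x, |u x| ∂μ ≤ ∫ x, |v x| ∂μ := by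
  obtain ⟨f, hf, hmin⟩ := exists_isMinOn_of_reflexive (inclusionInDoubleDual_surjective _)
    (isClosed_momentFibre hk a b _) (isBounded_momentFibre hk a b _)
    ⟨_, (toLp_mem_momentFibre_iff (memLp_of_bounded hw hwm 2)).2 ⟨hw, rfl⟩⟩
    (((convexOn_norm (convex_univ (𝕜 := ℝ))).comp_linearMap (l2ToL1 (μ := μ)).toLinearMap).subset
      (subset_univ _) (convex_momentFibre hk a b _)) l2ToL1.continuous.norm.continuousOn
  obtain ⟨hfmem, hfk⟩ := mem_momentFibre_iff.1 hf
  obtain ⟨u, hum, hurange, hfu⟩ :=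
    (Lp.aestronglyMeasurable f).aemeasurable.exists_ae_eq_range_subset hfmem (nonempty_Icc.2 hab)
  refine ⟨u, hum, range_subset_iff.1 hurange, ?_, fun v hvm hv hvk => ?_⟩
  · rw [← hfk]
    exact integral_congr_ae (hfu.mono fun x hx => by simp [hx])
  · have hv2 := memLp_of_bounded hv hvm 2
    calc ∫ x, |u x| ∂μ = ‖l2ToL1 f‖ := by
          rw [norm_l2ToL1]
          exact integral_congr_ae (hfu.mono fun x hx => by simp [hx])
      _ ≤ ‖l2ToL1 (hv2.toLp v)‖ := hmin ((toLp_mem_momentFibre_iff hv2).2 ⟨hv, hvk⟩)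
      _ = ∫ x, |v x| ∂μ := norm_l2ToL1_toLp hv2

end Moments

section Lyapunov

theorem exists_polynomial_ne_zero_map_eq_zero {R M : Type*} [CommRing R] [IsNoetherianRing R]
    [Nontrivial R] [AddCommGroup M] [Module R M] [Module.Finite R M]
    (L : Polynomial R →ₗ[R] M) : ∃ p, p ≠ 0 ∧ L p = 0 := by
  by_contra! h
  have hinj : Function.Injective L :=
    (injective_iff_map_eq_zero L).2 fun p hp => by_contra fun hne => h p hne hp
  exact Polynomial.not_finite (Module.Finite.of_injective L hinj)

theorem ae_eval_ne_zero {X : Type*} [MeasurableSpace X] {μ : Measure X}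
    [NullSingletonClass μ] {p : Polynomial ℝ} (hp : p ≠ 0) {φ : X → ℝ}
    (hφ : Function.Injective φ) : ∀ᵐ x ∂μ, p.eval (φ x) ≠ 0 := by
  have hfin : {x | p.eval (φ x) = 0}.Finite :=
    (Polynomial.finite_setOfPred_isRoot hp).preimage hφ.injOn
  simpa [ae_iff] using hfin.measure_zero μ

variable {X : Type*} [MeasurableSpace X] {μ : Measure X}
variable {F : Type*} [NormedAddCommGroup F] [NormedSpace ℝ F] [FiniteDimensional ℝ F]

theorem exists_polynomial_integral_eval_smul_eq_zero {k : X → F} (hk : Integrable k μ)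
    {φ : X → ℝ} (hφ : Measurable φ) {S : Set ℝ} (hS : IsCompact S) (hφS : ∀ x, φ x ∈ S) :
    ∃ p : Polynomial ℝ, p ≠ 0 ∧ (∀ t ∈ S, |p.eval t| ≤ 1) ∧ ∫ x, p.eval (φ x) • k x ∂μ = 0 := by
  have hbound (p : Polynomial ℝ) : ∃ C, ∀ t ∈ S, |p.eval t| ≤ C :=
    hS.exists_bound_of_continuousOn p.continuousOn
  have hint (p : Polynomial ℝ) : Integrable (fun x => p.eval (φ x) • k x) μ := by
    obtain ⟨C, hC⟩ := hbound p
    exact hk.bdd_smul C (p.continuous.measurable.comp hφ).aestronglyMeasurable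
      (.of_forall fun x => hC _ (hφS x))
  let L : Polynomial ℝ →ₗ[ℝ] F :=
    { toFun := fun p => ∫ x, p.eval (φ x) • k x ∂μ
      map_add' := fun p q => by
        simp_rw [Polynomial.eval_add, add_smul]
        exact integral_add (hint p) (hint q)
      map_smul' := fun c p => by
        simp_rw [Polynomial.eval_smul, smul_assoc, integral_smul, RingHom.id_apply] }
  obtain ⟨p, hp0, hp⟩ := exists_polynomial_ne_zero_map_eq_zero L
  obtain ⟨C, hC⟩ := hbound p
  have hC0 : 0 < max C 1 := by positivity
  refine ⟨(max C 1)⁻¹ • p, smul_ne_zero (inv_ne_zero hC0.ne') hp0, fun t ht => ?_, ?_⟩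
  · rw [Polynomial.eval_smul, smul_eq_mul, abs_mul, abs_inv, abs_of_pos hC0, inv_mul_le_one₀ hC0]
    exact (hC t ht).trans (le_max_left _ _)
  · exact (L.map_smul _ p).trans (by rw [hp, smul_zero])

variable [StandardBorelSpace X] [NullSingletonClass μ]

theorem exists_ae_ne_zero_integral_smul_eq_zero {k : X → F} (hk : Integrable k μ) :
    ∃ g : X → ℝ, Measurable g ∧ (∀ x, |g x| ≤ 1) ∧ (∀ᵐ x ∂μ, g x ≠ 0) ∧
      ∫ x, g x • k x ∂μ = 0 := by
  have hemb := measurableEmbedding_sigmoid_comp_embeddingReal X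
  let φ : X → ℝ := fun x => unitInterval.sigmoid (embeddingReal X x)
  have hφ : Measurable φ := measurable_subtype_coe.comp hemb.measurable
  obtain ⟨p, hp0, hp1, hp⟩ := exists_polynomial_integral_eval_smul_eq_zero hk hφ
    isCompact_Icc fun x => (unitInterval.sigmoid (embeddingReal X x)).2
  exact ⟨fun x => p.eval (φ x), p.continuous.measurable.comp hφ, fun x => hp1 _ (Subtype.prop _),
    ae_eval_ne_zero hp0 (Subtype.val_injective.comp hemb.injective), hp⟩

theorem exists_abs_le_integral_smul_eq_zero {k : X → F} (hk : Integrable k μ) {w : X → ℝ} {C : ℝ}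
    (hwm : AEStronglyMeasurable w μ) (hw : ∀ᵐ x ∂μ, w x ∈ Icc 0 C) :
    ∃ h : X → ℝ, AEStronglyMeasurable h μ ∧ (∀ᵐ x ∂μ, |h x| ≤ w x) ∧
      (∀ᵐ x ∂μ, h x = 0 → w x = 0) ∧ ∫ x, h x • k x ∂μ = 0 := by
  have hwk : Integrable (fun x => w x • k x) μ :=
    hk.bdd_smul C hwm (hw.mono fun x hx => (Real.norm_of_nonneg hx.1).trans_le hx.2)
  obtain ⟨g, hgm, hg1, hg0, hg⟩ := exists_ae_ne_zero_integral_smul_eq_zero hwk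
  refine ⟨fun x => g x * w x, hgm.aestronglyMeasurable.mul hwm, ?_, ?_, ?_⟩
  · filter_upwards [hw] with x hx
    rw [abs_mul, abs_of_nonneg hx.1]
    exact mul_le_of_le_one_left hx.1 (hg1 x)
  · filter_upwards [hg0] with x hgx hx
    exact (mul_eq_zero.1 hx).resolve_left hgx
  · simpa only [mul_smul] using hg

variable [IsFiniteMeasure μ]

theorem ae_mem_pair_of_mem_extremePoints_momentFibre {k : X → F} {hk : MemLp k 2 μ} {a b : ℝ}
    {y : F} {f : Lp ℝ 2 μ} (hf : f ∈ (momentFibre hk a b y).extremePoints ℝ) :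
    ∀ᵐ x ∂μ, f x ∈ ({a, b} : Set ℝ) := by
  have hfm := Lp.aestronglyMeasurable f
  have hgap : ∀ᵐ x ∂μ, min (f x - a) (b - f x) ∈ Icc 0 (b - a) :=
    (mem_momentFibre_iff.1 hf.1).1.mono fun x hx =>
      ⟨le_min (sub_nonneg.2 hx.1) (sub_nonneg.2 hx.2),
        (min_le_right _ _).trans (sub_le_sub_left hx.1 b)⟩
  obtain ⟨h, hm, hle, hzero, hint⟩ := exists_abs_le_integral_smul_eq_zero
    (hk.integrable one_le_two) (w := fun x => min (f x - a) (b - f x))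
    ((hfm.sub aestronglyMeasurable_const).inf (aestronglyMeasurable_const.sub hfm)) hgap
  have h2 : MemLp h 2 μ := .of_bound hm (b - a) <| by
    filter_upwards [hle, hgap] with x hx hgx using hx.trans hgx.2
  have hadd := add_toLp_mem_momentFibre hf.1 h2 hle hint
  have hsub := add_toLp_mem_momentFibre hf.1 h2.neg
    (by simpa only [Pi.neg_apply, abs_neg] using hle) (by simp [integral_neg, hint])
  rw [MemLp.toLp_neg h2, ← sub_eq_add_neg] at hsub
  filter_upwards [h2.coeFn_toLp, hzero,
    (Lp.eq_zero_iff_ae_eq_zero).1 (eq_zero_of_mem_extremePoints hf hadd hsub)] with x hx hgx hx0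
  have hmin : min (f x - a) (b - f x) = 0 := hgx (hx.symm.trans hx0)
  rcases min_eq_iff.1 hmin with ⟨hfa, -⟩ | ⟨hfb, -⟩
  · exact .inl (sub_eq_zero.1 hfa)
  · exact .inr (sub_eq_zero.1 hfb).symm

theorem exists_pair_valued_integral_smul_eq {k : X → F} (hk : MemLp k 2 μ) {a b : ℝ} {w : X → ℝ}
    (hwm : AEStronglyMeasurable w μ) (hw : ∀ᵐ x ∂μ, w x ∈ Icc a b) :
    ∃ u : X → ℝ, Measurable u ∧ (∀ x, u x ∈ ({a, b} : Set ℝ)) ∧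
      ∫ x, u x • k x ∂μ = ∫ x, w x • k x ∂μ := by
  have hw2 := memLp_of_bounded hw hwm 2
  obtain ⟨f, hf⟩ := extremePoints_nonempty_of_reflexive (inclusionInDoubleDual_surjective _)
    (convex_momentFibre hk a b _) (isClosed_momentFibre hk a b _) (isBounded_momentFibre hk a b _)
    ⟨_, (toLp_mem_momentFibre_iff hw2).2 ⟨hw, rfl⟩⟩
  obtain ⟨u, hum, hurange, hfu⟩ :=
    (Lp.aestronglyMeasurable f).aemeasurable.exists_ae_eq_range_subset
      (ae_mem_pair_of_mem_extremePoints_momentFibre hf) (insert_nonempty a {b})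
  refine ⟨u, hum, range_subset_iff.1 hurange, ?_⟩
  rw [← (mem_momentFibre_iff.1 hf.1).2]
  exact integral_congr_ae (hfu.mono fun x hx => by simp [hx])

theorem exists_pair_valued_integral_smul_eq_integral_eq {k : X → F} (hk : MemLp k 2 μ) {a b : ℝ}
    {w : X → ℝ} (hwm : AEStronglyMeasurable w μ) (hw : ∀ᵐ x ∂μ, w x ∈ Icc a b) :
    ∃ u : X → ℝ, Measurable u ∧ (∀ x, u x ∈ ({a, b} : Set ℝ)) ∧
      ∫ x, u x • k x ∂μ = ∫ x, w x • k x ∂μ ∧ ∫ x, u x ∂μ = ∫ x, w x ∂μ := by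
  have hk1 : MemLp (fun x => (k x, (1 : ℝ))) 2 μ := .of_fst_snd ⟨hk, memLp_const 1⟩
  have hint {v : X → ℝ} (hv : MemLp v 2 μ) : Integrable (fun x => v x • (k x, (1 : ℝ))) μ :=
    memLp_one_iff_integrable.1 (hk1.smul hv)
  obtain ⟨u, hum, hu, huk⟩ := exists_pair_valued_integral_smul_eq hk1 hwm hw
  have hu2 : MemLp u 2 μ := .of_bound hum.aestronglyMeasurable (max |a| |b|) <|
    .of_forall fun x => by rcases hu x with h | (h : u x = b) <;> simp [h]
  have hw2 := hint (memLp_of_bounded hw hwm 2)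
  refine ⟨u, hum, hu, ?_, ?_⟩
  · simpa only [fst_integral (hint hu2), fst_integral hw2, Prod.smul_fst]
      using congrArg Prod.fst huk
  · simpa only [snd_integral (hint hu2), snd_integral hw2, Prod.smul_snd, smul_eq_mul, mul_one]
      using congrArg Prod.snd huk

theorem exists_bangOffBang_integral_abs_eq {k : X → F} (hk : MemLp k 2 μ) {u : X → ℝ}
    (hum : Measurable u) (hu : ∀ᵐ x ∂μ, |u x| ≤ 1) :
    ∃ v : X → ℝ, Measurable v ∧ (∀ x, v x ∈ ({-1, 0, 1} : Set ℝ)) ∧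
      ∫ x, v x • k x ∂μ = ∫ x, u x • k x ∂μ ∧ ∫ x, |v x| ∂μ = ∫ x, |u x| ∂μ := by
  let s : X → ℝ := fun x => if 0 ≤ u x then 1 else -1
  have hsm : Measurable s := .ite (hum measurableSet_Ici) measurable_const measurable_const
  have hs (x : X) : s x = 1 ∨ s x = -1 := ite_eq_or_eq _ _ _
  have hsu (x : X) : |u x| * s x = u x := by
    by_cases h : 0 ≤ u x
    · simp [s, h, abs_of_nonneg]
    · simp [s, h, abs_of_neg (not_le.1 h)]
  have hsk : MemLp (fun x => s x • k x) 2 μ :=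
    hk.of_le (hsm.aestronglyMeasurable.smul hk.aestronglyMeasurable) <| .of_forall fun x => by
      rcases hs x with h | h <;> simp [h]
  obtain ⟨v, hvm, hv, hvk, hv1⟩ := exists_pair_valued_integral_smul_eq_integral_eq hsk
    hum.norm.aestronglyMeasurable (hu.mono fun x hx => ⟨norm_nonneg (u x), hx⟩)
  refine ⟨fun x => v x * s x, hvm.mul hsm, fun x => ?_, ?_, ?_⟩
  · rcases hv x with h | (h : v x = 1) <;> rcases hs x with h' | h' <;> simp [h, h']
  · simpa only [smul_smul, Real.norm_eq_abs, hsu] using hvk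
  · refine (integral_congr_ae (.of_forall fun x => ?_)).trans hv1
    rcases hv x with h | (h : v x = 1) <;> rcases hs x with h' | h' <;> simp [h, h']

end Lyapunov

section Sparsity

variable {X : Type*} [MeasurableSpace X] {μ : Measure X} {u : X → ℝ}

theorem integral_abs_le_measureReal_ne_zero [IsFiniteMeasure μ] (hum : Measurable u)
    (hu : ∀ᵐ x ∂μ, |u x| ≤ 1) : ∫ x, |u x| ∂μ ≤ μ.real {x | u x ≠ 0} := by
  have hs : MeasurableSet {x | u x ≠ 0} := hum (measurableSet_singleton 0).compl
  rw [← integral_indicator_one hs]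
  refine integral_mono_of_nonneg (.of_forall fun x => abs_nonneg _)
    ((integrable_const (1 : ℝ)).indicator hs) ?_
  filter_upwards [hu] with x hx
  by_cases hux : u x = 0 <;> simp [hux, hx]

theorem integral_abs_eq_measureReal_ne_zero (hum : Measurable u)
    (hu : ∀ x, u x ∈ ({-1, 0, 1} : Set ℝ)) : ∫ x, |u x| ∂μ = μ.real {x | u x ≠ 0} := by
  have hs : MeasurableSet {x | u x ≠ 0} := hum (measurableSet_singleton 0).compl
  rw [← integral_indicator_one hs]
  refine integral_congr_ae (.of_forall fun x => ?_)
  rcases hu x with h | h | (h : u x = 1) <;> simp [h]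

end Sparsity

section Control

open Matrix

theorem memLp_restrict_of_continuousOn {X E : Type*} [TopologicalSpace X] [MeasurableSpace X]
    [OpensMeasurableSpace X] [NormedAddCommGroup E] {μ : Measure X}
    [IsFiniteMeasureOnCompacts μ] {K : Set X} (hK : IsCompact K) (hKm : MeasurableSet K)
    {f : X → E} (hf : ContinuousOn f K) (p : ENNReal) : MemLp f p (μ.restrict K) := by
  have : IsFiniteMeasure (μ.restrict K) := isFiniteMeasure_restrict.2 hK.measure_lt_top.ne
  obtain ⟨C, hC⟩ := hK.exists_bound_of_continuousOn hf
  exact .of_bound (hf.aestronglyMeasurable_of_isCompact hK hKm) C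
    ((ae_restrict_mem hKm).mono hC)

attribute [local instance] Matrix.linftyOpNormedRing Matrix.linftyOpNormedAlgebra in
theorem continuous_exp_neg_smul_mulVec {m : Type*} [Fintype m] [DecidableEq m]
    (A : Matrix m m ℝ) (B : m → ℝ) : Continuous fun s : ℝ => (NormedSpace.exp ((-s) • A)) *ᵥ B := by
  let _ : NormedAlgebra ℚ (Matrix m m ℝ) := .restrictScalars ℚ ℝ _
  exact (NormedSpace.exp_continuous.comp (continuous_neg.smul continuous_const)).matrix_mulVec
    continuous_const

variable {n : ℕ} {T : ℝ} {u : ℝ → ℝ} (A : Matrix (Fin n) (Fin n) ℝ) (B : Fin n → ℝ)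

theorem memLp_exp_neg_smul_mulVec (T : ℝ) :
    MemLp (fun s : ℝ => (NormedSpace.exp ((-s) • A)) *ᵥ B) 2 (volume.restrict (Icc 0 T)) :=
  memLp_restrict_of_continuousOn isCompact_Icc measurableSet_Icc
    (continuous_exp_neg_smul_mulVec A B).continuousOn 2

theorem L0Norm_eq_measureReal_restrict :
    L0Norm T u = (volume.restrict (Icc 0 T)).real {t | u t ≠ 0} := by
  rw [measureReal_restrict_apply' measurableSet_Icc, inter_comm]
  rfl

theorem MagBdd.ae_abs_le_one (hu : MagBdd T u) :
    ∀ᵐ t ∂volume.restrict (Icc 0 T), |u t| ≤ 1 :=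
  ae_restrict_of_forall_mem measurableSet_Icc hu

theorem L1Norm_le_L0Norm (hum : Measurable u) (hu : MagBdd T u) : L1Norm T u ≤ L0Norm T u := by
  rw [L0Norm_eq_measureReal_restrict]
  exact integral_abs_le_measureReal_ne_zero hum hu.ae_abs_le_one

theorem exists_bangOffBang_L0Norm_eq_L1Norm (hum : Measurable u) (hu : MagBdd T u) :
    ∃ v, Measurable v ∧ MagBdd T v ∧ stateInt n T A B v = stateInt n T A B u ∧
      L0Norm T v = L1Norm T u := by
  obtain ⟨v, hvm, hv, hvk, hv1⟩ :=
    exists_bangOffBang_integral_abs_eq (memLp_exp_neg_smul_mulVec A B T) hum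
      hu.ae_abs_le_one
  refine ⟨v, hvm, fun t _ => ?_, hvk, ?_⟩
  · rcases hv t with h | h | (h : v t = 1) <;> simp [h]
  · rw [L0Norm_eq_measureReal_restrict, ← integral_abs_eq_measureReal_ne_zero hvm hv]
    exact hv1

theorem exists_forall_L1Norm_le (hum : Measurable u) (hu : MagBdd T u) :
    ∃ v, Measurable v ∧ MagBdd T v ∧ stateInt n T A B v = stateInt n T A B u ∧
      ∀ w, Measurable w → MagBdd T w → stateInt n T A B w = stateInt n T A B u →
        L1Norm T v ≤ L1Norm T w := by
  obtain ⟨v, hvm, hv, hvk, hmin⟩ :=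
    exists_forall_integral_abs_le (memLp_exp_neg_smul_mulVec A B T)
      hum.aestronglyMeasurable (hu.ae_abs_le_one.mono fun _ => abs_le.1) (by norm_num)
  exact ⟨v, hvm, fun t _ => abs_le.2 (hv t), hvk, fun w hwm hw hwk =>
    hmin w hwm.aestronglyMeasurable (hw.ae_abs_le_one.mono fun _ => abs_le.1) hwk⟩

variable {A B}

theorem admissible_neg_iff {ξ : Fin n → ℝ} :
    Admissible n T A B ξ (-u) ↔ Measurable u ∧ MagBdd T u ∧ ξ = stateInt n T A B u := by
  have hmag : MagBdd T (-u) ↔ MagBdd T u := by simp [MagBdd]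
  have hstate : stateInt n T A B (-u) = -stateInt n T A B u := by
    simp [stateInt, integral_neg]
  rw [Admissible, hmag, hstate, neg_inj, eq_comm (a := ξ)]
  exact and_congr_left' measurable_neg_iff

theorem V0_stateInt_le_L0Norm (hum : Measurable u) (hu : MagBdd T u) :
    V0 n T A B (stateInt n T A B u) ≤ L0Norm T u :=
  csInf_le ⟨0, by rintro _ ⟨v, -, rfl⟩; exact ENNReal.toReal_nonneg⟩
    ⟨-u, admissible_neg_iff.2 ⟨hum, hu, rfl⟩, by simp [L0Norm]⟩

theorem le_V0 {ξ : Fin n → ℝ} {c : ℝ} (hξ : ξ ∈ Reach n T A B)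
    (hc : ∀ u, Measurable u → MagBdd T u → ξ = stateInt n T A B u → c ≤ L0Norm T u) :
    c ≤ V0 n T A B ξ := by
  obtain ⟨u, hu⟩ := hξ
  refine le_csInf ⟨_, -u, admissible_neg_iff.2 hu, rfl⟩ ?_
  rintro _ ⟨v, hv, rfl⟩
  rw [← neg_neg v, admissible_neg_iff] at hv
  simpa [L0Norm] using hc (-v) hv.1 hv.2.1 hv.2.2

end Control

theorem ReachL1_eq_sublevel_general (n : ℕ) (T : ℝ) (A : Matrix (Fin n) (Fin n) ℝ)
    (B : Fin n → ℝ) (α : ℝ) :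
    ReachL1 n T A B α = {ξ ∈ Reach n T A B | V0 n T A B ξ ≤ α} := by
  ext ξ
  constructor
  · rintro ⟨u, hum, hu, huα, rfl⟩
    obtain ⟨v, hvm, hv, hvu, hvL⟩ := exists_bangOffBang_L0Norm_eq_L1Norm A B hum hu
    refine ⟨⟨u, hum, hu, rfl⟩, ?_⟩
    calc V0 n T A B (stateInt n T A B u) ≤ L0Norm T v := hvu ▸ V0_stateInt_le_L0Norm hvm hv
      _ = L1Norm T u := hvL
      _ ≤ α := huα
  · rintro ⟨⟨w, hwm, hw, rfl⟩, hα⟩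
    obtain ⟨u, hum, hu, huw, hmin⟩ := exists_forall_L1Norm_le A B hwm hw
    have huV : L1Norm T u ≤ V0 n T A B (stateInt n T A B w) :=
      le_V0 ⟨w, hwm, hw, rfl⟩ fun v hvm hv hvw =>
        (hmin v hvm hv hvw.symm).trans (L1Norm_le_L0Norm hvm hv)
    exact ⟨u, hum, hu, huV.trans hα, huw.symm⟩

theorem ReachL1_eq_sublevel (n : ℕ) (T : ℝ) (hT : 0 < T)
    (A : Matrix (Fin n) (Fin n) ℝ) (B : Fin n → ℝ)
    (hctrb : (ctrbMatrix n A B).rank = n) (hA : A.det ≠ 0) :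
    ∀ α ∈ Icc (0:ℝ) T,
      ReachL1 n T A B α = {ξ ∈ Reach n T A B | V0 n T A B ξ ≤ α} :=
  fun α _ => ReachL1_eq_sublevel_general n T A B α
end
end

section
/- Suppose the pair (A,B) is controllable (the controllability matrix [B, AB, …, A^{n-1}B] has rank n) and A is nonsingular. Then the extended value function V̄ defined on ℝⁿ by V̄(ξ) = V(ξ) for ξ ∈ R and V̄(ξ) = T for ξ ∉ R is lower semi-continuous on ℝⁿ, i.e., for every α ∈ ℝ the set {ξ ∈ ℝⁿ : V̄(ξ) > α} is open. -/
open MeasureTheory Set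

noncomputable section

open Classical in
/-- The extended value function `V̄`. -/
def Vbar (n : ℕ) (T : ℝ) (A : Matrix (Fin n) (Fin n) ℝ) (B : Fin n → ℝ)
    (ξ : Fin n → ℝ) : ℝ :=
  if ξ ∈ Reach n T A B then V0 n T A B ξ else T

/-!
If every control can be replaced by one with values in `{-1, 0, 1}` that steers to the same state
at the same `L¹` cost, then `L⁰` and `L¹` costs give the same value function, whose sublevel sets
below `T` are the reflected sets `ReachL1`. Lower semicontinuity thus reduces to closedness of
`ReachL1`. State and cost together form an integral of `(u • e^{-As}B, |u|)`, which lies in the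
convex hull of the three points with `u ∈ {-1, 0, 1}` (here `|u| ≤ 1`), so both facts follow from a
Lyapunov theorem: for an atomless measure on the line, the integrals of measurable selections of a
finite family form a compact set, cut out by the support function `p ↦ ∫ ⨆ i, p (g i s)`.

For the Lyapunov theorem, let `x` satisfy all support inequalities. Discard choices after a time
`t` (keep only `g i₀` there), with `t` as small as `x` permits; then some inequality `p ≠ 0` is
tight. Only the members maximizing `p` now matter, and after subtracting one of them they lie in
`ker p`, so induction on the dimension concludes.
-/

open Filter Topology Module

section FiniteFamilies

variable {ι E : Type*} [Nonempty ι]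

lemma eventually_iSup_add_natCast_mul_eq [Finite ι] {a b : ι → ℝ} (hb : ∀ i, b i ≤ 0) {i₀ : ι}
    (ha₀ : a i₀ = 0) (hb₀ : b i₀ = 0) :
    ∀ᶠ n : ℕ in atTop, ⨆ i, (a i + n * b i) = ⨆ i, if b i = 0 then a i else 0 := by
  have hneg : ∀ᶠ n : ℕ in atTop, ∀ i, b i ≠ 0 → a i + n * b i ≤ 0 := by
    refine eventually_all.2 fun i ↦ ?_
    by_cases hi : b i = 0
    · simp [hi]
    have hlim : Tendsto (fun n : ℕ ↦ a i + n * b i) atTop atBot :=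
      tendsto_atBot_add_const_left _ _
        (tendsto_natCast_atTop_atTop.atTop_mul_const_of_neg ((hb i).lt_of_ne hi))
    exact (hlim.eventually_le_atBot 0).mono fun n hn _ ↦ hn
  filter_upwards [hneg] with n hn
  refine le_antisymm (ciSup_le fun i ↦ ?_) (ciSup_le fun i ↦ ?_)
  · refine le_ciSup_of_le (finite_range _).bddAbove (if b i = 0 then i else i₀) ?_
    split_ifs with hi
    · simp [hi]
    · simpa [hb₀, ha₀] using hn i hi
  · refine le_ciSup_of_le (finite_range _).bddAbove (if b i = 0 then i else i₀) ?_
    split_ifs with hi <;> simp [hi, ha₀, hb₀]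

lemma abs_iSup_apply_le [Fintype ι] [NormedAddCommGroup E] [NormedSpace ℝ E]
    (p : StrongDual ℝ E) (x : ι → E) : |⨆ i, p (x i)| ≤ ‖p‖ * ∑ i, ‖x i‖ := by
  obtain ⟨i, hi⟩ := exists_eq_ciSup_of_finite (f := fun i ↦ p (x i))
  rw [← hi, ← Real.norm_eq_abs]
  exact (p.le_opNorm _).trans <| mul_le_mul_of_nonneg_left
    (Finset.single_le_sum (f := fun i ↦ ‖x i‖) (fun _ _ ↦ norm_nonneg _) (Finset.mem_univ i))
    (norm_nonneg p)

lemma continuous_iSup_apply [Finite ι] [NormedAddCommGroup E] [NormedSpace ℝ E] (x : ι → E) :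
    Continuous fun p : StrongDual ℝ E ↦ ⨆ i, p (x i) := by
  have := Fintype.ofFinite ι
  simp only [← Finset.sup'_univ_eq_ciSup]
  fun_prop

end FiniteFamilies

section MeasurableSelections

variable {Ω ι E : Type*} [MeasurableSpace Ω] [MeasurableSpace ι]

lemma exists_measurable_forall_mem [Countable ι] [Nonempty ι] {S : ι → Set Ω}
    (hS : ∀ i, MeasurableSet (S i)) (hcover : ∀ s, ∃ i, s ∈ S i) :
    ∃ σ : Ω → ι, Measurable σ ∧ ∀ s, s ∈ S (σ s) := by
  classical
  obtain ⟨e, he⟩ := exists_surjective_nat ι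
  have hex : ∀ s, ∃ k, s ∈ S (e k) := fun s ↦ by
    obtain ⟨i, hi⟩ := hcover s
    obtain ⟨k, rfl⟩ := he i
    exact ⟨k, hi⟩
  exact ⟨fun s ↦ e (Nat.find (hex s)),
    measurable_from_nat.comp (measurable_find hex fun k ↦ hS (e k)),
    fun s ↦ Nat.find_spec (hex s)⟩

lemma exists_measurable_argmax [Finite ι] [Nonempty ι] {h : ι → Ω → ℝ}
    (hh : ∀ i, Measurable (h i)) :
    ∃ σ : Ω → ι, Measurable σ ∧ ∀ i s, h i s ≤ h (σ s) s := by
  obtain ⟨σ, hσ, hmax⟩ := exists_measurable_forall_mem (S := fun i ↦ {s | ∀ j, h j s ≤ h i s})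
    (fun i ↦ by
      simp only [ofPred_forall]
      exact .iInter fun j ↦ measurableSet_le (hh j) (hh i))
    (fun s ↦ Finite.exists_max fun i ↦ h i s)
  exact ⟨σ, hσ, fun i s ↦ hmax s i⟩

variable [MeasurableSpace E] {μ : Measure Ω} {g : ι → Ω → E} {σ : Ω → ι}

lemma measurable_selection [Countable ι] [MeasurableSingletonClass ι]
    (hg : ∀ i, Measurable (g i)) (hσ : Measurable σ) : Measurable fun s ↦ g (σ s) s :=
  (measurable_from_prod_countable_left (f := fun z : Ω × ι ↦ g z.2 z.1) hg).comp
    (measurable_id.prodMk hσ)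

lemma integrable_selection [NormedAddCommGroup E] [BorelSpace E] [SecondCountableTopology E]
    [Finite ι] [MeasurableSingletonClass ι] (hg : ∀ i, Measurable (g i))
    (hgi : ∀ i, Integrable (g i) μ) (hσ : Measurable σ) :
    Integrable (fun s ↦ g (σ s) s) μ := by
  have := Fintype.ofFinite ι
  refine (integrable_finsetSum Finset.univ fun i _ ↦ (hgi i).norm).mono'
    (measurable_selection hg hσ).aestronglyMeasurable (.of_forall fun s ↦ ?_)
  exact Finset.single_le_sum (f := fun i ↦ ‖g i s‖) (fun _ _ ↦ norm_nonneg _) (Finset.mem_univ _)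

end MeasurableSelections

section SelectionIntegrals

variable {Ω ι E : Type*} [MeasurableSpace Ω] [NormedAddCommGroup E] [NormedSpace ℝ E]

/-- The Aumann integral of the multifunction `s ↦ {g i s | i}`: the set of integrals of its
measurable selections, each encoded by the index function `σ` that picks it. -/
def selectionIntegrals [MeasurableSpace ι] (μ : Measure Ω) (g : ι → Ω → E) : Set E :=
  {x | ∃ σ : Ω → ι, Measurable σ ∧ ∫ s, g (σ s) s ∂μ = x}

/-- The support function `p ↦ sup {p x | x ∈ selectionIntegrals μ g}`, in the form obtained by
maximizing under the integral sign. -/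
def selectionSupport (μ : Measure Ω) (g : ι → Ω → E) (p : StrongDual ℝ E) : ℝ :=
  ∫ s, ⨆ i, p (g i s) ∂μ

/-- The closed convex hull of `selectionIntegrals μ g`, cut out by its support function. -/
def selectionHull (μ : Measure Ω) (g : ι → Ω → E) : Set E :=
  {x | ∀ p : StrongDual ℝ E, p x ≤ selectionSupport μ g p}

variable {μ : Measure Ω} {g : ι → Ω → E}

lemma isClosed_selectionHull : IsClosed (selectionHull μ g) := by
  simp only [selectionHull, ofPred_forall]
  exact isClosed_iInter fun p ↦ isClosed_le p.continuous continuous_const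

lemma selectionSupport_smul {c : ℝ} (hc : 0 ≤ c) (p : StrongDual ℝ E) :
    selectionSupport μ g (c • p) = c * selectionSupport μ g p := by
  simp [selectionSupport, ← Real.mul_iSup_of_nonneg hc, integral_const_mul]

lemma mem_selectionHull_of_norm_eq_one {x : E}
    (hx : ∀ p : StrongDual ℝ E, ‖p‖ = 1 → p x ≤ selectionSupport μ g p) :
    x ∈ selectionHull μ g := by
  intro p
  rcases eq_or_ne p 0 with rfl | hp
  · simp [selectionSupport]
  have hunit := hx (‖p‖⁻¹ • p) (norm_smul_inv_norm (𝕜 := ℝ) hp)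
  rw [selectionSupport_smul (by positivity)] at hunit
  exact le_of_mul_le_mul_left hunit (by positivity)

lemma isBounded_selectionIntegrals [Finite ι] [MeasurableSpace ι]
    (hgi : ∀ i, Integrable (g i) μ) :
    Bornology.IsBounded (selectionIntegrals μ g) := by
  have := Fintype.ofFinite ι
  refine isBounded_iff_forall_norm_le.2 ⟨∫ s, ∑ i, ‖g i s‖ ∂μ, ?_⟩
  rintro _ ⟨σ, -, rfl⟩
  exact norm_integral_le_of_norm_le (integrable_finsetSum _ fun i _ ↦ (hgi i).norm) <|
    .of_forall fun s ↦ Finset.single_le_sum (f := fun i ↦ ‖g i s‖) (fun _ _ ↦ norm_nonneg _)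
      (Finset.mem_univ _)

variable [MeasurableSpace E] [BorelSpace E]

lemma measurable_iSup_apply [Countable ι] (hg : ∀ i, Measurable (g i)) (p : StrongDual ℝ E) :
    Measurable fun s ↦ ⨆ i, p (g i s) :=
  .iSup fun i ↦ p.continuous.measurable.comp (hg i)

lemma integrable_iSup_apply [Finite ι] [Nonempty ι] (hg : ∀ i, Measurable (g i))
    (hgi : ∀ i, Integrable (g i) μ) (p : StrongDual ℝ E) :
    Integrable (fun s ↦ ⨆ i, p (g i s)) μ := by
  have := Fintype.ofFinite ι
  exact ((integrable_finsetSum Finset.univ fun i _ ↦ (hgi i).norm).const_mul ‖p‖).mono'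
    (measurable_iSup_apply hg p).aestronglyMeasurable (.of_forall fun s ↦ abs_iSup_apply_le p _)

variable [FiniteDimensional ℝ E] [Finite ι]

lemma mem_selectionIntegrals_of_sub_mem [MeasurableSpace ι]
    [MeasurableSingletonClass ι] (hg : ∀ i, Measurable (g i))
    (hgi : ∀ i, Integrable (g i) μ) {h : Ω → E} (hh : Integrable h μ) {x : E}
    (hx : x - ∫ s, h s ∂μ ∈ selectionIntegrals μ fun i s ↦ g i s - h s) :
    x ∈ selectionIntegrals μ g := by
  obtain ⟨σ, hσ, hint⟩ := hx
  rw [integral_sub (integrable_selection hg hgi hσ) hh] at hint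
  exact ⟨σ, hσ, sub_left_injective hint⟩

variable [Nonempty ι]

lemma selectionSupport_sub (hg : ∀ i, Measurable (g i)) (hgi : ∀ i, Integrable (g i) μ)
    {h : Ω → E} (hh : Integrable h μ) (p : StrongDual ℝ E) :
    selectionSupport μ (fun i s ↦ g i s - h s) p = selectionSupport μ g p - p (∫ s, h s ∂μ) := by
  simp only [selectionSupport, map_sub, ← ciSup_sub (finite_range _).bddAbove]
  rw [integral_sub (integrable_iSup_apply hg hgi p) (p.integrable_comp hh),
    p.integral_comp_comm hh]

lemma sub_mem_selectionHull (hg : ∀ i, Measurable (g i)) (hgi : ∀ i, Integrable (g i) μ)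
    {h : Ω → E} (hh : Integrable h μ) {x : E} (hx : x ∈ selectionHull μ g) :
    x - ∫ s, h s ∂μ ∈ selectionHull μ fun i s ↦ g i s - h s := fun p ↦ by
  rw [selectionSupport_sub hg hgi hh, map_sub]
  exact sub_le_sub_right (hx p) _

lemma selectionIntegrals_subset_selectionHull [MeasurableSpace ι]
    [MeasurableSingletonClass ι] (hg : ∀ i, Measurable (g i))
    (hgi : ∀ i, Integrable (g i) μ) : selectionIntegrals μ g ⊆ selectionHull μ g := by
  rintro _ ⟨σ, hσ, rfl⟩ p
  have hσi := integrable_selection hg hgi hσ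
  rw [← p.integral_comp_comm hσi]
  exact integral_mono (p.integrable_comp hσi) (integrable_iSup_apply hg hgi p) fun s ↦
    le_ciSup (f := fun i ↦ p (g i s)) (finite_range _).bddAbove (σ s)

end SelectionIntegrals

section Faces

variable {Ω ι E : Type*} [NormedAddCommGroup E] [NormedSpace ℝ E] {p : StrongDual ℝ E}
  {d : ι → Ω → E} {σ : Ω → ι}

/-- The part of the family `d` lying on the hyperplane `p = 0`, as a family in that hyperplane.
Members off the hyperplane are replaced by `0`, which is harmless because it is applied to
families of which some member vanishes at every point. -/
def faceFamily (p : StrongDual ℝ E) (d : ι → Ω → E) (i : ι) (s : Ω) : p.toLinearMap.ker :=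
  if h : p (d i s) = 0 then ⟨d i s, h⟩ else 0

lemma coe_faceFamily (i : ι) (s : Ω) :
    (faceFamily p d i s : E) = if p (d i s) = 0 then d i s else 0 := by
  unfold faceFamily
  split_ifs <;> rfl

lemma norm_faceFamily_le (i : ι) (s : Ω) : ‖faceFamily p d i s‖ ≤ ‖d i s‖ := by
  rw [Submodule.coe_norm, coe_faceFamily]
  split_ifs <;> simp

variable [MeasurableSpace Ω] {μ : Measure Ω} [MeasurableSpace E] [BorelSpace E]

lemma measurable_faceFamily (hd : ∀ i, Measurable (d i)) (i : ι) :
    Measurable (faceFamily p d i) := by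
  refine MeasurableEmbedding.subtype_coe
    p.isClosed_ker.measurableSet |>.measurable_comp_iff.1 ?_
  simp only [Function.comp_def, coe_faceFamily]
  exact .ite (measurableSet_eq_fun (p.continuous.measurable.comp (hd i)) measurable_const)
    (hd i) measurable_const

lemma integrable_faceFamily [SecondCountableTopology E] (hd : ∀ i, Measurable (d i))
    (hdi : ∀ i, Integrable (d i) μ) (i : ι) : Integrable (faceFamily p d i) μ :=
  (hdi i).norm.mono' (measurable_faceFamily hd i).aestronglyMeasurable <|
    .of_forall (norm_faceFamily_le i)

variable [Finite ι]

-- Tilting `q` by a large multiple of `p` penalizes every member off the face.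
lemma tendsto_selectionSupport_add_smul [Nonempty ι] (hd : ∀ i, Measurable (d i))
    (hdi : ∀ i, Integrable (d i) μ) (hp : ∀ i s, p (d i s) ≤ 0) (hσ : ∀ s, d (σ s) s = 0)
    (q : StrongDual ℝ E) :
    Tendsto (fun n : ℕ ↦ selectionSupport μ d (q + (n : ℝ) • p)) atTop
      (𝓝 (selectionSupport μ (faceFamily p d) (q.comp p.toLinearMap.ker.subtypeL))) := by
  have := Fintype.ofFinite ι
  refine tendsto_integral_of_dominated_convergence (fun s ↦ ‖q‖ * ∑ i, ‖d i s‖)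
    (fun n ↦ (measurable_iSup_apply hd _).aestronglyMeasurable)
    ((integrable_finsetSum _ fun i _ ↦ (hdi i).norm).const_mul ‖q‖)
    (fun n ↦ .of_forall fun s ↦ ?_) (.of_forall fun s ↦ ?_)
  · have hlower : 0 ≤ ⨆ i, (q + (n : ℝ) • p) (d i s) :=
      le_ciSup_of_le (finite_range _).bddAbove (σ s) (by simp [hσ])
    have hupper : ⨆ i, (q + (n : ℝ) • p) (d i s) ≤ ⨆ i, q (d i s) :=
      ciSup_mono (finite_range _).bddAbove fun i ↦ by
        simpa using mul_nonpos_of_nonneg_of_nonpos n.cast_nonneg (hp i s)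
    rw [Real.norm_of_nonneg hlower]
    exact hupper.trans <| (le_abs_self _).trans <| abs_iSup_apply_le q _
  · have hface : ⨆ i, (q.comp p.toLinearMap.ker.subtypeL) (faceFamily p d i s) =
        ⨆ i, if p (d i s) = 0 then q (d i s) else 0 := by
      refine iSup_congr fun i ↦ ?_
      simp only [ContinuousLinearMap.comp_apply, Submodule.subtypeL_apply, coe_faceFamily,
        apply_ite q, map_zero]
    have hevent := eventually_iSup_add_natCast_mul_eq (a := fun i ↦ q (d i s))
      (b := fun i ↦ p (d i s)) (hp · s) (i₀ := σ s) (by simp [hσ]) (by simp [hσ])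
    rw [hface]
    exact tendsto_const_nhds.congr' (hevent.mono fun n hn ↦ by simpa using hn.symm)

lemma mem_selectionHull_faceFamily [Nonempty ι] (hd : ∀ i, Measurable (d i))
    (hdi : ∀ i, Integrable (d i) μ) (hp : ∀ i s, p (d i s) ≤ 0) (hσ : ∀ s, d (σ s) s = 0)
    (y : p.toLinearMap.ker) (hy : (y : E) ∈ selectionHull μ d) :
    y ∈ selectionHull μ (faceFamily p d) := by
  intro q
  obtain ⟨r, hr, -⟩ := exists_extension_norm_eq p.toLinearMap.ker q
  obtain rfl : r.comp p.toLinearMap.ker.subtypeL = q := ContinuousLinearMap.ext hr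
  refine ge_of_tendsto' (tendsto_selectionSupport_add_smul hd hdi hp hσ r) fun n ↦ ?_
  have hpy : p (y : E) = 0 := y.2
  simpa [hpy] using hy (r + (n : ℝ) • p)

lemma coe_mem_selectionIntegrals_of_faceFamily [FiniteDimensional ℝ E] [MeasurableSpace ι]
    [DiscreteMeasurableSpace ι] (hd : ∀ i, Measurable (d i)) (hdi : ∀ i, Integrable (d i) μ)
    (hσm : Measurable σ) (hσ : ∀ s, d (σ s) s = 0) {y : p.toLinearMap.ker}
    (hy : y ∈ selectionIntegrals μ (faceFamily p d)) : (y : E) ∈ selectionIntegrals μ d := by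
  obtain ⟨τ, hτ, rfl⟩ := hy
  have hmeas : Measurable fun s ↦ p (d (τ s) s) :=
    p.continuous.measurable.comp (measurable_selection hd hτ)
  refine ⟨fun s ↦ if p (d (τ s) s) = 0 then τ s else σ s,
    .ite (measurableSet_eq_fun hmeas measurable_const) hτ hσm, ?_⟩
  have hcoe := p.toLinearMap.ker.subtypeL.integral_comp_comm (μ := μ)
    (integrable_selection (g := faceFamily p d) (measurable_faceFamily hd)
      (integrable_faceFamily hd hdi) hτ)
  refine Eq.trans (integral_congr_ae (.of_forall fun s ↦ ?_)) hcoe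
  simp only [Submodule.subtypeL_apply, coe_faceFamily]
  split_ifs
  · rfl
  · exact hσ s

end Faces

section Truncation

variable {ι E : Type*} {g : ι → ℝ → E} {i₀ : ι}

/-- The family `g` up to time `t`, with all members collapsed to `g i₀` afterwards. Extended times
make the range of `t` compact, from the single selection `g i₀` at `⊥` to all of `g` at `⊤`. -/
def truncateFamily (g : ι → ℝ → E) (i₀ : ι) (t : EReal) (i : ι) (s : ℝ) : E :=
  if (s : EReal) ≤ t then g i s else g i₀ s

lemma truncateFamily_bot (i : ι) : truncateFamily g i₀ ⊥ i = g i₀ := by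
  ext s
  simp [truncateFamily]

lemma truncateFamily_top (i : ι) : truncateFamily g i₀ ⊤ i = g i := by
  ext s
  simp [truncateFamily]

lemma truncateFamily_eventuallyEq {s : ℝ} {t : EReal} (hst : (s : EReal) ≠ t) (i : ι) :
    ∀ᶠ t' in 𝓝 t, truncateFamily g i₀ t' i s = truncateFamily g i₀ t i s := by
  rcases hst.lt_or_gt with hst | hst
  · filter_upwards [lt_mem_nhds hst] with t' ht'
    simp [truncateFamily, hst.le, ht'.le]
  · filter_upwards [gt_mem_nhds hst] with t' ht'
    simp [truncateFamily, hst.not_ge, ht'.not_ge]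

lemma measurable_truncateFamily [MeasurableSpace E] (hg : ∀ i, Measurable (g i)) (t : EReal)
    (i : ι) : Measurable (truncateFamily g i₀ t i) :=
  .ite (measurableSet_le measurable_coe_real_ereal measurable_const) (hg i) (hg i₀)

lemma truncateFamily_eq_selection (t : EReal) (i : ι) (s : ℝ) :
    truncateFamily g i₀ t i s = g (if (s : EReal) ≤ t then i else i₀) s := by
  unfold truncateFamily
  split_ifs <;> rfl

variable [NormedAddCommGroup E] {μ : Measure ℝ}

lemma norm_truncateFamily_le_sum [Fintype ι] (t : EReal) (i : ι) (s : ℝ) :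
    ‖truncateFamily g i₀ t i s‖ ≤ ∑ j, ‖g j s‖ := by
  rw [truncateFamily_eq_selection]
  exact Finset.single_le_sum (f := fun j ↦ ‖g j s‖) (fun _ _ ↦ norm_nonneg _) (Finset.mem_univ _)

lemma selectionIntegrals_truncateFamily_subset [NormedSpace ℝ E] [MeasurableSpace ι]
    (t : EReal) :
    selectionIntegrals μ (truncateFamily g i₀ t) ⊆ selectionIntegrals μ g := by
  rintro _ ⟨σ, hσ, rfl⟩
  exact ⟨fun s ↦ if (s : EReal) ≤ t then σ s else i₀,
    .ite (measurableSet_le measurable_coe_real_ereal measurable_const) hσ measurable_const,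
    by simp only [truncateFamily_eq_selection]⟩

variable [MeasurableSpace E] [BorelSpace E] [Finite ι]

lemma integrable_truncateFamily [SecondCountableTopology E]
    (hg : ∀ i, Measurable (g i)) (hgi : ∀ i, Integrable (g i) μ) (t : EReal) (i : ι) :
    Integrable (truncateFamily g i₀ t i) μ := by
  have := Fintype.ofFinite ι
  exact (integrable_finsetSum Finset.univ fun i _ ↦ (hgi i).norm).mono'
    (measurable_truncateFamily hg t i).aestronglyMeasurable
    (.of_forall (norm_truncateFamily_le_sum t i))

variable [NormedSpace ℝ E] [Nonempty ι]

lemma continuous_selectionSupport_truncateFamily [NullSingletonClass μ]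
    (hg : ∀ i, Measurable (g i)) (hgi : ∀ i, Integrable (g i) μ) :
    Continuous fun z : EReal × StrongDual ℝ E ↦
      selectionSupport μ (truncateFamily g i₀ z.1) z.2 := by
  have := Fintype.ofFinite ι
  refine continuous_iff_continuousAt.2 fun ⟨t, p⟩ ↦ ?_
  refine continuousAt_of_dominated
    (bound := fun s ↦ (‖p‖ + 1) * (Fintype.card ι * ∑ i, ‖g i s‖))
    (.of_forall fun z ↦
      (measurable_iSup_apply (measurable_truncateFamily hg z.1) z.2).aestronglyMeasurable)
    ?_ (((integrable_finsetSum _ fun i _ ↦ (hgi i).norm).const_mul _).const_mul _) ?_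
  · have hnear : ∀ᶠ z : EReal × StrongDual ℝ E in 𝓝 (t, p), ‖z.2‖ ≤ ‖p‖ + 1 :=
      (continuous_snd.norm.tendsto (t, p)).eventually (ge_mem_nhds (lt_add_one ‖p‖))
    filter_upwards [hnear] with z hz
    refine .of_forall fun s ↦ (abs_iSup_apply_le z.2 _).trans ?_
    gcongr
    simpa using Finset.sum_le_card_nsmul Finset.univ _ _ fun i _ ↦
      norm_truncateFamily_le_sum (g := g) (i₀ := i₀) z.1 i s
  · have hnull : μ {s : ℝ | (s : EReal) = t} = 0 :=
      Set.Subsingleton.measure_zero (fun a ha b hb ↦ EReal.coe_injective (ha.trans hb.symm)) μ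
    filter_upwards [compl_mem_ae_iff.2 hnull] with s hs
    have hevent : ∀ᶠ z : EReal × StrongDual ℝ E in 𝓝 (t, p), ∀ i,
        truncateFamily g i₀ z.1 i s = truncateFamily g i₀ t i s :=
      (continuous_fst.tendsto (t, p)).eventually
        (eventually_all.2 fun i ↦ truncateFamily_eventuallyEq hs i)
    refine ((continuous_iSup_apply fun i ↦ truncateFamily g i₀ t i s).comp
      continuous_snd).continuousAt.congr ?_
    filter_upwards [hevent] with z hz
    simp [hz]

/- The minimum over unit functionals `p` of `selectionSupport μ (truncateFamily g i₀ t) p - p x` is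
continuous in `t`, negative at `⊥` and nonnegative at `⊤`, so it vanishes at some `t`. -/
lemma exists_truncateFamily_support_eq [FiniteDimensional ℝ E] [NullSingletonClass μ]
    (hg : ∀ i, Measurable (g i)) (hgi : ∀ i, Integrable (g i) μ) {x : E}
    (hx : x ∈ selectionHull μ g) (hne : x ≠ ∫ s, g i₀ s ∂μ) :
    ∃ t, x ∈ selectionHull μ (truncateFamily g i₀ t) ∧ ∃ p : StrongDual ℝ E, p ≠ 0 ∧
      p x = selectionSupport μ (truncateFamily g i₀ t) p := by
  set gap : EReal → StrongDual ℝ E → ℝ := fun t p ↦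
    selectionSupport μ (truncateFamily g i₀ t) p - p x
  have hgap : Continuous ↿gap := (continuous_selectionSupport_truncateFamily hg hgi).sub
    (continuous_snd.clm_apply continuous_const)
  have hgap_t (t : EReal) : Continuous (gap t) := hgap.comp (.prodMk_right t)
  have hsphere : IsCompact (Metric.sphere (0 : StrongDual ℝ E) 1) := isCompact_sphere 0 1
  obtain ⟨p₀, hp₀, hp₀x⟩ := exists_dual_vector ℝ (x - ∫ s, g i₀ s ∂μ)
    (norm_ne_zero_iff.2 (sub_ne_zero.2 hne))
  have hp₀_mem : p₀ ∈ Metric.sphere (0 : StrongDual ℝ E) 1 := by simpa using hp₀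
  have hbdd (t : EReal) : BddBelow (gap t '' Metric.sphere 0 1) :=
    (hsphere.image (hgap_t t)).bddBelow
  have hbot : sInf (gap ⊥ '' Metric.sphere 0 1) ≤ 0 := by
    refine (csInf_le (hbdd ⊥) ⟨p₀, hp₀_mem, rfl⟩).trans ?_
    have : gap ⊥ p₀ = -‖x - ∫ s, g i₀ s ∂μ‖ := by
      simp only [gap, selectionSupport, truncateFamily_bot, ciSup_const]
      rw [p₀.integral_comp_comm (hgi i₀), ← neg_sub, ← map_sub, hp₀x]
      simp
    simp [this]
  have htop : 0 ≤ sInf (gap ⊤ '' Metric.sphere 0 1) := by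
    refine le_csInf (.image _ ⟨p₀, hp₀_mem⟩) ?_
    rintro _ ⟨p, -, rfl⟩
    simpa [gap, selectionSupport, truncateFamily_top] using hx p
  obtain ⟨t, ht⟩ := mem_range_of_exists_le_of_exists_ge (hsphere.continuous_sInf hgap)
    ⟨⊥, hbot⟩ ⟨⊤, htop⟩
  obtain ⟨p, hp, hpgap⟩ := (hsphere.image (hgap_t t)).sInf_mem (.image _ ⟨p₀, hp₀_mem⟩)
  refine ⟨t, mem_selectionHull_of_norm_eq_one fun q hq ↦ ?_, p, ?_, ?_⟩
  · exact sub_nonneg.1 (ht ▸ csInf_le (hbdd t) ⟨q, by simpa using hq, rfl⟩)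
  · exact ne_zero_of_mem_unit_sphere ⟨p, hp⟩
  · exact (sub_eq_zero.1 (hpgap.trans ht)).symm

end Truncation

section Lyapunov

variable {ι E : Type*} [Finite ι] [Nonempty ι] [MeasurableSpace ι] [DiscreteMeasurableSpace ι]
  [NormedAddCommGroup E] [NormedSpace ℝ E] [FiniteDimensional ℝ E] [MeasurableSpace E]
  [BorelSpace E]

lemma mem_selectionIntegrals_of_support_eq {Ω : Type*} [MeasurableSpace Ω] {μ : Measure Ω}
    {g : ι → Ω → E}
    (hg : ∀ i, Measurable (g i)) (hgi : ∀ i, Integrable (g i) μ) {p : StrongDual ℝ E}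
    (ih : ∀ d : ι → Ω → p.toLinearMap.ker, (∀ i, Measurable (d i)) → (∀ i, Integrable (d i) μ) →
      selectionHull μ d ⊆ selectionIntegrals μ d)
    {x : E} (hx : x ∈ selectionHull μ g) (hpx : p x = selectionSupport μ g p) :
    x ∈ selectionIntegrals μ g := by
  obtain ⟨σ, hσ, hmax⟩ := exists_measurable_argmax fun i ↦ p.continuous.measurable.comp (hg i)
  simp only [Function.comp_apply] at hmax
  have hσg := measurable_selection hg hσ
  have hσi := integrable_selection hg hgi hσ
  set d : ι → Ω → E := fun i s ↦ g i s - g (σ s) s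
  have hd (i : ι) : Measurable (d i) := (hg i).sub hσg
  have hdi (i : ι) : Integrable (d i) μ := (hgi i).sub hσi
  have hpd (i : ι) (s : Ω) : p (d i s) ≤ 0 := by simpa [d] using hmax i s
  have hσd (s : Ω) : d (σ s) s = 0 := sub_self _
  have hpσ : p (∫ s, g (σ s) s ∂μ) = selectionSupport μ g p := by
    rw [← p.integral_comp_comm hσi]
    exact integral_congr_ae <| .of_forall fun s ↦ le_antisymm
      (le_ciSup (f := fun i ↦ p (g i s)) (finite_range _).bddAbove (σ s)) (ciSup_le (hmax · s))
  have hker : x - ∫ s, g (σ s) s ∂μ ∈ p.toLinearMap.ker := by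
    simp [hpx, hpσ]
  have hface := mem_selectionHull_faceFamily hd hdi hpd hσd ⟨_, hker⟩
    (sub_mem_selectionHull hg hgi hσi hx)
  exact mem_selectionIntegrals_of_sub_mem hg hgi hσi <|
    coe_mem_selectionIntegrals_of_faceFamily hd hdi hσ hσd <|
      ih _ (measurable_faceFamily hd) (integrable_faceFamily hd hdi) hface

variable {μ : Measure ℝ} [NullSingletonClass μ] {g : ι → ℝ → E}

/-- A form of Lyapunov's convexity theorem. -/
theorem selectionIntegrals_eq_selectionHull
    (hg : ∀ i, Measurable (g i)) (hgi : ∀ i, Integrable (g i) μ) :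
    selectionIntegrals μ g = selectionHull μ g := by
  refine (selectionIntegrals_subset_selectionHull hg hgi).antisymm ?_
  induction hdim : finrank ℝ E using Nat.strong_induction_on generalizing E with
  | _ k ih =>
  intro x hx
  obtain ⟨i₀⟩ := ‹Nonempty ι›
  by_cases hne : x = ∫ s, g i₀ s ∂μ
  · exact ⟨fun _ ↦ i₀, measurable_const, hne.symm⟩
  obtain ⟨t, hxt, p, hp, hpx⟩ := exists_truncateFamily_support_eq hg hgi hx hne
  have hker : finrank ℝ p.toLinearMap.ker < k := hdim ▸ Submodule.finrank_lt fun h ↦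
    hp (ContinuousLinearMap.coe_injective (LinearMap.ker_eq_top.1 h))
  exact selectionIntegrals_truncateFamily_subset t <| mem_selectionIntegrals_of_support_eq
    (measurable_truncateFamily hg t) (integrable_truncateFamily hg hgi t)
    (fun d hd hdi ↦ ih _ hker hd hdi rfl) hxt hpx

theorem isCompact_selectionIntegrals
    (hg : ∀ i, Measurable (g i)) (hgi : ∀ i, Integrable (g i) μ) :
    IsCompact (selectionIntegrals μ g) :=
  have := FiniteDimensional.proper_real E
  Metric.isCompact_of_isClosed_isBounded
    (selectionIntegrals_eq_selectionHull hg hgi ▸ isClosed_selectionHull)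
    (isBounded_selectionIntegrals hgi)

end Lyapunov

section TernaryControls

variable {Ω F : Type*} [NormedAddCommGroup F] [NormedSpace ℝ F] {f : Ω → F}

lemma abs_le_one_of_mem_ternary {c : ℝ} (hc : c ∈ ({-1, 0, 1} : Set ℝ)) : |c| ≤ 1 := by
  rcases hc with h | h | (h : c = 1) <;> simp [h]

/-- The values `(v • f s, |v|)` for `v ∈ {-1, 0, 1}`: selections of this family are controls with
values in `{-1, 0, 1}`, and their integrals record the steered state together with the `L¹` norm. -/
def ternaryFamily (f : Ω → F) (v : ({-1, 0, 1} : Set ℝ)) (s : Ω) : F × ℝ :=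
  ((v : ℝ) • f s, |(v : ℝ)|)

lemma exists_eq_abs_smul_ternaryFamily (c : ℝ) (s : Ω) :
    ∃ v, (c • f s, |c|) = |c| • ternaryFamily f v s := by
  rcases le_total 0 c with hc | hc
  · exact ⟨⟨1, by simp⟩, by simp [ternaryFamily, abs_of_nonneg hc]⟩
  · exact ⟨⟨-1, by simp⟩, by simp [ternaryFamily, abs_of_nonpos hc]⟩

lemma apply_le_iSup_ternaryFamily (p : StrongDual ℝ (F × ℝ)) {c : ℝ} (hc : |c| ≤ 1) (s : Ω) :
    p (c • f s, |c|) ≤ ⨆ v, p (ternaryFamily f v s) := by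
  have hle (v) : p (ternaryFamily f v s) ≤ ⨆ v, p (ternaryFamily f v s) :=
    le_ciSup (f := fun v ↦ p (ternaryFamily f v s)) (finite_range _).bddAbove v
  have hnonneg : 0 ≤ ⨆ v, p (ternaryFamily f v s) := by
    have hzero : ternaryFamily f ⟨0, by simp⟩ s = 0 := by simp [ternaryFamily]
    simpa [hzero] using hle ⟨0, by simp⟩
  obtain ⟨v, hv⟩ := exists_eq_abs_smul_ternaryFamily (f := f) c s
  rw [hv, map_smul, smul_eq_mul]
  exact (mul_le_mul_of_nonneg_left (hle v) (abs_nonneg c)).trans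
    (mul_le_of_le_one_left hnonneg hc)

variable [MeasurableSpace Ω] {μ : Measure Ω}

lemma integrable_ternaryFamily [IsFiniteMeasure μ] (hfi : Integrable f μ)
    (v : ({-1, 0, 1} : Set ℝ)) : Integrable (ternaryFamily f v) μ :=
  (hfi.smul _).prodMk (integrable_const _)

lemma exists_control_of_mem_selectionIntegrals_ternaryFamily [IsFiniteMeasure μ]
    [CompleteSpace F] (hfi : Integrable f μ) {z : F × ℝ}
    (hz : z ∈ selectionIntegrals μ (ternaryFamily f)) :
    ∃ v : Ω → ℝ, Measurable v ∧ (∀ s, v s ∈ ({-1, 0, 1} : Set ℝ)) ∧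
      ∫ s, v s • f s ∂μ = z.1 ∧ ∫ s, |v s| ∂μ = z.2 := by
  obtain ⟨σ, hσ, rfl⟩ := hz
  have hv : Measurable fun s ↦ (σ s : ℝ) := measurable_subtype_coe.comp hσ
  have hv_le (s : Ω) : ‖(σ s : ℝ)‖ ≤ 1 := abs_le_one_of_mem_ternary (σ s).2
  have hvi : Integrable (fun s ↦ (σ s : ℝ)) μ :=
    .of_bound hv.aestronglyMeasurable 1 (.of_forall hv_le)
  have hvfi : Integrable (fun s ↦ (σ s : ℝ) • f s) μ :=
    hfi.bdd_smul 1 hv.aestronglyMeasurable (.of_forall hv_le)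
  have hpair : ∫ s, ternaryFamily f (σ s) s ∂μ =
      (∫ s, (σ s : ℝ) • f s ∂μ, ∫ s, |(σ s : ℝ)| ∂μ) := integral_pair hvfi hvi.abs
  exact ⟨fun s ↦ σ s, hv, fun s ↦ (σ s).2, by rw [hpair], by rw [hpair]⟩

variable [MeasurableSpace F] [BorelSpace F]

lemma measurable_ternaryFamily (hf : Measurable f) (v : ({-1, 0, 1} : Set ℝ)) :
    Measurable (ternaryFamily f v) :=
  (hf.const_smul _).prodMk measurable_const

lemma mk_integral_mem_selectionIntegrals_ternaryFamily [FiniteDimensional ℝ F]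
    {ν : Measure ℝ} [IsFiniteMeasure ν] [NullSingletonClass ν] {f : ℝ → F} (hf : Measurable f)
    (hfi : Integrable f ν) {u : ℝ → ℝ} (hu : Measurable u) (hu_le : ∀ᵐ s ∂ν, |u s| ≤ 1) :
    (∫ s, u s • f s ∂ν, ∫ s, |u s| ∂ν) ∈ selectionIntegrals ν (ternaryFamily f) := by
  have hui : Integrable u ν := .of_bound hu.aestronglyMeasurable 1 hu_le
  have hufi : Integrable (fun s ↦ u s • f s) ν :=
    hfi.bdd_smul 1 hu.aestronglyMeasurable hu_le
  have hm := measurable_ternaryFamily hf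
  have hi := integrable_ternaryFamily hfi
  rw [selectionIntegrals_eq_selectionHull hm hi]
  intro p
  have hpair : Integrable (fun s ↦ (u s • f s, |u s|)) ν := hufi.prodMk hui.abs
  rw [← integral_pair hufi hui.abs, ← p.integral_comp_comm hpair]
  refine integral_mono_ae (p.integrable_comp hpair) (integrable_iSup_apply hm hi p) ?_
  filter_upwards [hu_le] with s hs
  exact apply_le_iSup_ternaryFamily p hs s

end TernaryControls

section ControlNorms

variable {T : ℝ} {u : ℝ → ℝ}

lemma l0Norm_nonneg : 0 ≤ L0Norm T u :=
  ENNReal.toReal_nonneg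

lemma l0Norm_le (hT : 0 ≤ T) : L0Norm T u ≤ T := by
  have hle := ENNReal.toReal_mono (by simp) (measure_mono (μ := volume)
    (sep_subset (Icc (0 : ℝ) T) fun t ↦ u t ≠ 0))
  simpa [L0Norm, hT] using hle

lemma l0Norm_eq_integral_indicator (hu : Measurable u) :
    L0Norm T u = ∫ t in Icc (0 : ℝ) T, {t | u t ≠ 0}.indicator 1 t := by
  have hsupp : MeasurableSet {t | u t ≠ 0} := hu (measurableSet_singleton 0).compl
  rw [integral_indicator_one hsupp, L0Norm, Measure.real, Measure.restrict_apply hsupp]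
  congr 2
  ext t
  simp [and_comm]

lemma l1Norm_le_l0Norm (hu : Measurable u) (hbdd : MagBdd T u) : L1Norm T u ≤ L0Norm T u := by
  rw [l0Norm_eq_integral_indicator hu, L1Norm]
  have hsupp : MeasurableSet {t | u t ≠ 0} := hu (measurableSet_singleton 0).compl
  refine setIntegral_mono_on
    (.of_bound (by simp) hu.abs.aestronglyMeasurable 1 ?_)
    ((integrable_const 1).indicator hsupp) measurableSet_Icc fun t ht ↦ ?_
  · filter_upwards [ae_restrict_mem measurableSet_Icc] with t ht
    simpa using hbdd t ht
  · by_cases hut : u t = 0 <;> simp [hut, hbdd t ht]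

lemma l0Norm_eq_l1Norm (hu : Measurable u) (hternary : ∀ t, u t ∈ ({-1, 0, 1} : Set ℝ)) :
    L0Norm T u = L1Norm T u := by
  rw [l0Norm_eq_integral_indicator hu, L1Norm]
  congr 1 with t
  rcases hternary t with h | h | (h : u t = 1) <;> simp [h]

end ControlNorms

section Control

variable {n : ℕ} {T : ℝ} {A : Matrix (Fin n) (Fin n) ℝ} {B : Fin n → ℝ}

/-- The kernel `s ↦ e^{-As} B` against which `stateInt` integrates the control. -/
def steeringKernel (A : Matrix (Fin n) (Fin n) ℝ) (B : Fin n → ℝ) (s : ℝ) : Fin n → ℝ :=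
  (NormedSpace.exp ((-s) • A)).mulVec B

open scoped Matrix.Norms.Operator in
lemma continuous_steeringKernel : Continuous (steeringKernel A B) := by
  have hexp : Continuous fun s : ℝ ↦ NormedSpace.exp ((-s) • A) :=
    NormedSpace.exp_continuous.comp (by fun_prop)
  exact hexp.matrix_mulVec continuous_const

lemma stateInt_neg (u : ℝ → ℝ) : stateInt n T A B (fun t ↦ -u t) = -stateInt n T A B u := by
  simp only [stateInt, neg_smul, integral_neg]

lemma mem_reachL1_iff_exists_mem_selectionIntegrals {x : Fin n → ℝ} {c : ℝ} :
    x ∈ ReachL1 n T A B c ↔ ∃ r ≤ c, (x, r) ∈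
      selectionIntegrals (volume.restrict (Icc 0 T)) (ternaryFamily (steeringKernel A B)) := by
  constructor
  · rintro ⟨u, hu, hbdd, hcost, rfl⟩
    exact ⟨_, hcost, mk_integral_mem_selectionIntegrals_ternaryFamily
      continuous_steeringKernel.measurable continuous_steeringKernel.integrableOn_Icc hu
      ((ae_restrict_mem measurableSet_Icc).mono hbdd)⟩
  · rintro ⟨r, hr, hxr⟩
    obtain ⟨v, hv, hternary, hstate, hnorm⟩ :=
      exists_control_of_mem_selectionIntegrals_ternaryFamily
        continuous_steeringKernel.integrableOn_Icc hxr
    exact ⟨v, hv, fun t _ ↦ abs_le_one_of_mem_ternary (hternary t), hnorm.trans_le hr,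
      hstate.symm⟩

lemma exists_ternary_control_of_mem_reachL1 {x : Fin n → ℝ} {c : ℝ}
    (hx : x ∈ ReachL1 n T A B c) :
    ∃ v : ℝ → ℝ, Measurable v ∧ (∀ t, v t ∈ ({-1, 0, 1} : Set ℝ)) ∧ L1Norm T v ≤ c ∧
      stateInt n T A B v = x := by
  obtain ⟨r, hr, hxr⟩ := mem_reachL1_iff_exists_mem_selectionIntegrals.1 hx
  obtain ⟨v, hv, hternary, hstate, hnorm⟩ :=
    exists_control_of_mem_selectionIntegrals_ternaryFamily
      continuous_steeringKernel.integrableOn_Icc hxr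
  exact ⟨v, hv, hternary, hnorm.trans_le hr, hstate⟩

lemma isCompact_reachL1 (c : ℝ) : IsCompact (ReachL1 n T A B c) := by
  have himage : ReachL1 n T A B c = Prod.fst '' (selectionIntegrals (volume.restrict (Icc 0 T))
      (ternaryFamily (steeringKernel A B)) ∩ {z | z.2 ≤ c}) := by
    ext x
    simp [mem_reachL1_iff_exists_mem_selectionIntegrals, and_comm]
  rw [himage]
  refine ((isCompact_selectionIntegrals ?_ ?_).inter_right
    (isClosed_le continuous_snd continuous_const)).image continuous_fst
  · exact measurable_ternaryFamily continuous_steeringKernel.measurable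
  · exact integrable_ternaryFamily continuous_steeringKernel.integrableOn_Icc

end Control

section ValueFunction

variable {n : ℕ} {T : ℝ} {A : Matrix (Fin n) (Fin n) ℝ} {B : Fin n → ℝ} {ξ : Fin n → ℝ} {c : ℝ}

-- Replacing `u` by `-u` reconciles the sign conventions of `Reach` and `Admissible`.
lemma mem_reach_iff_exists_admissible :
    ξ ∈ Reach n T A B ↔ ∃ u, Admissible n T A B ξ u := by
  constructor
  · rintro ⟨u, hu, hbdd, rfl⟩
    exact ⟨fun t ↦ -u t, hu.neg, fun t ht ↦ by simpa using hbdd t ht, stateInt_neg u⟩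
  · rintro ⟨u, hu, hbdd, hstate⟩
    exact ⟨fun t ↦ -u t, hu.neg, fun t ht ↦ by simpa using hbdd t ht,
      by rw [stateInt_neg, hstate, neg_neg]⟩

lemma vbar_le_l0Norm {u : ℝ → ℝ} (hu : Admissible n T A B ξ u) :
    Vbar n T A B ξ ≤ L0Norm T u := by
  rw [Vbar, if_pos (mem_reach_iff_exists_admissible.2 ⟨u, hu⟩)]
  refine csInf_le ⟨0, ?_⟩ ⟨u, hu, rfl⟩
  rintro _ ⟨v, -, rfl⟩
  exact l0Norm_nonneg

lemma vbar_le (hT : 0 ≤ T) : Vbar n T A B ξ ≤ T := by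
  by_cases hξ : ξ ∈ Reach n T A B
  · obtain ⟨u, hu⟩ := mem_reach_iff_exists_admissible.1 hξ
    exact (vbar_le_l0Norm hu).trans (l0Norm_le hT)
  · exact (if_neg hξ).le

lemma exists_l0Norm_lt_of_vbar_lt (hcT : c ≤ T) (hlt : Vbar n T A B ξ < c) :
    ∃ u, Admissible n T A B ξ u ∧ L0Norm T u < c := by
  by_cases hξ : ξ ∈ Reach n T A B
  · rw [Vbar, if_pos hξ] at hlt
    obtain ⟨u, hu⟩ := mem_reach_iff_exists_admissible.1 hξ
    obtain ⟨_, ⟨v, hv, rfl⟩, hvc⟩ := exists_lt_of_csInf_lt (by exact ⟨_, u, hu, rfl⟩) hlt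
    exact ⟨v, hv, hvc⟩
  · rw [Vbar, if_neg hξ] at hlt
    exact absurd hlt hcT.not_gt

lemma neg_mem_reachL1_of_vbar_lt (hcT : c ≤ T) (hlt : Vbar n T A B ξ < c) :
    -ξ ∈ ReachL1 n T A B c := by
  obtain ⟨u, ⟨hu, hbdd, hstate⟩, hcost⟩ := exists_l0Norm_lt_of_vbar_lt hcT hlt
  exact ⟨u, hu, hbdd, (l1Norm_le_l0Norm hu hbdd).trans hcost.le, hstate.symm⟩

lemma vbar_le_of_neg_mem_reachL1 (hξ : -ξ ∈ ReachL1 n T A B c) : Vbar n T A B ξ ≤ c := by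
  obtain ⟨v, hv, hternary, hcost, hstate⟩ := exists_ternary_control_of_mem_reachL1 hξ
  have hadm : Admissible n T A B ξ v :=
    ⟨hv, fun t _ ↦ abs_le_one_of_mem_ternary (hternary t), hstate⟩
  exact (vbar_le_l0Norm hadm).trans ((l0Norm_eq_l1Norm hv hternary).trans_le hcost)

end ValueFunction

theorem Vbar_lowerSemicontinuous_general (n : ℕ) (T : ℝ) (hT : 0 ≤ T)
    (A : Matrix (Fin n) (Fin n) ℝ) (B : Fin n → ℝ) : LowerSemicontinuous (Vbar n T A B) := by
  intro ξ y hy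
  obtain ⟨c, hyc, hcξ⟩ := exists_between hy
  have hξ : -ξ ∉ ReachL1 n T A B c := fun h ↦ (vbar_le_of_neg_mem_reachL1 h).not_gt hcξ
  have hnear : ∀ᶠ ξ' in 𝓝 ξ, -ξ' ∉ ReachL1 n T A B c :=
    continuous_neg.continuousAt.eventually
      ((isCompact_reachL1 c).isClosed.isOpen_compl.mem_nhds hξ)
  filter_upwards [hnear] with ξ' hξ'
  exact hyc.trans_le <| not_lt.1 fun hlt ↦
    hξ' (neg_mem_reachL1_of_vbar_lt (hcξ.le.trans (vbar_le hT)) hlt)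

theorem Vbar_lowerSemicontinuous (n : ℕ) (T : ℝ) (hT : 0 < T)
    (A : Matrix (Fin n) (Fin n) ℝ) (B : Fin n → ℝ)
    (hctrb : (ctrbMatrix n A B).rank = n) (hA : A.det ≠ 0) :
    ∀ α : ℝ, IsOpen {ξ : Fin n → ℝ | α < Vbar n T A B ξ} := fun α ↦
  (Vbar_lowerSemicontinuous_general n T hT.le A B).isOpen_preimage α
end
end
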